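/- Let k be a field of characteristic 0, let A = k[x,y]/(x^2, xy, y^4) with the standard grading and B = k[w,z]/(w^2, wz, z^4) graded with weights w(w) = 2, w(z) = 1, and let C = A ⊗_k B. Then H(A) = (1,2,1,1), H(B) = (1,1,2,1), x + y ∈ A_1 is a strong Lefschetz element of A with Jordan type (4,1), z ∈ B_1 is a strong Lefschetz element of B with Jordan type (4,1), H(C) = (1,3,5,7,5,3,1) with H(C)^∨ = (7,5,5,3,3,1,1), but the linear form ℓ = (x+y) ⊗ 1 + 1 ⊗ z ∈ C_1 has Jordan type P_ℓ = (7,5,4,4,3,1,1) ≠ H(C)^∨; in particular ℓ is not a strong Lefschetz element of C, even though its two components are strong Lefschetz for A and B. -/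

import Mathlib

/-!
Both factors have a homogeneous basis `1, u, u², u³, x` with `u * x = 0` and `u⁴ = 0`: for `A` take
`u = x + y` and the given `x`, of degree `1`; for `B` take `u = z` and `w` in place of `x`, of
degree `2`. Strong Lefschetz properties of the factors and all Hilbert functions are read off such
bases.

If linearly independent vectors `e s` in the kernel of an endomorphism `f` lie in the ranges of
`f ^ (p s - 1)`, and the `p s` add up to the dimension, then the `p s` are the Jordan type of `f`.
Writing `U = u ⊗ 1` and `Z = 1 ⊗ z`, multiplication by `U + Z` has strings of lengths
`7, 5, 3, 1` starting at `1`, `U - Z`, `3U² - 4UZ + 3Z²`, `U³ - U²Z + UZ² - Z³`, two strings of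
length `4` starting at `x ⊗ 1` and `1 ⊗ w`, and one of length `1` at `x ⊗ w`.
The strong Lefschetz property fails between degrees `1` and `5`, both of dimension `3`, since
`(U + Z)⁴ (x ⊗ 1) = x ⊗ z⁴ = 0`.
-/

/-- `P` is the Jordan type (multiset of Jordan block sizes) of the `k`-linear
endomorphism `f`, characterized by the ranks of the powers of `f`. -/
def IsJordanTypeOf {k A : Type*} [Field k] [AddCommGroup A] [Module k A]
    (f : A →ₗ[k] A) (P : Multiset ℕ) : Prop :=
  (∀ p ∈ P, 0 < p) ∧
  ∀ j : ℕ, Module.finrank k (LinearMap.range (f ^ j)) = (P.map (fun p => p - j)).sum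

/-- The conjugate partition of a Hilbert function `H` (whose values are bounded
by `n`): its `i`-th part (for `1 ≤ i ≤ n`) is `#{d | H d ≥ i}`; zero parts are
discarded. -/
noncomputable def conjHilb (H : ℕ → ℕ) (n : ℕ) : Multiset ℕ :=
  ((Multiset.range n).map (fun i => Set.ncard {d : ℕ | i + 1 ≤ H d})).filter (fun c => 0 < c)

/-- A linear form `ℓ` is strong Lefschetz for the graded algebra `A` with
grading `𝒜` if `ℓ ∈ 𝒜 1` and all multiplication maps `×ℓ^j : 𝒜 i → 𝒜 (i+j)`
have maximal rank. -/
def IsSL {k A : Type*} [Field k] [CommRing A] [Algebra k A]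
    (𝒜 : ℕ → Submodule k A) (ℓ : A) : Prop :=
  ℓ ∈ 𝒜 1 ∧ ∀ i j : ℕ,
    Module.finrank k ((𝒜 i).map (LinearMap.mulLeft k (ℓ ^ j))) =
      min (Module.finrank k (𝒜 i)) (Module.finrank k (𝒜 (i + j)))

open TensorProduct

/-- The grading on the tensor product `C = A ⊗_k B` of two graded algebras:
`C_d = ⊕_{i+j=d} A_i ⊗ B_j`. -/
noncomputable def tensorGrading {k A B : Type*} [Field k]
    [CommRing A] [Algebra k A] [CommRing B] [Algebra k B]
    (𝒜 : ℕ → Submodule k A) (ℬ : ℕ → Submodule k B) (d : ℕ) :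
    Submodule k (A ⊗[k] B) :=
  ⨆ (p : ℕ × ℕ) (_ : p.1 + p.2 = d),
    Submodule.map₂ (TensorProduct.mk k A B) (𝒜 p.1) (ℬ p.2)

open MvPolynomial

set_option maxHeartbeats 2000000
set_option synthInstance.maxHeartbeats 1000000

section JordanType

variable {k V W : Type*} [Field k] [AddCommGroup V] [Module k V] [AddCommGroup W] [Module k W]

theorem finrank_map_add_finrank_ker_inf (f : V →ₗ[k] W) (S : Submodule k V)
    [FiniteDimensional k S] :
    Module.finrank k (S.map f) + Module.finrank k (LinearMap.ker f ⊓ S : Submodule k V) =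
      Module.finrank k S := by
  rw [← LinearMap.finrank_range_add_finrank_ker (f.domRestrict S), LinearMap.range_domRestrict,
    LinearMap.ker_domRestrict, inf_comm, ← Submodule.map_comap_subtype,
    Submodule.finrank_map_subtype_eq]

-- With `r j` the rank of `f ^ j` and `g j = ∑ (p s - j)`, the vectors `e s` with `j < p s` lie in
-- `ker f ⊓ range (f ^ j)`, so `r - g` is antitone; it vanishes at `0` and is eventually
-- nonnegative.
theorem isJordanTypeOf_of_linearIndependent [FiniteDimensional k V] {ι : Type*} [Fintype ι]
    {f : V →ₗ[k] V} {e : ι → V} {p : ι → ℕ} (hp : ∀ s, 0 < p s) (he : LinearIndependent k e)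
    (hker : ∀ s, f (e s) = 0) (hrange : ∀ s, e s ∈ LinearMap.range (f ^ (p s - 1)))
    (hdim : Module.finrank k V = ∑ s, p s) :
    IsJordanTypeOf f (Finset.univ.val.map p) := by
  refine ⟨by simpa using hp, fun j => ?_⟩
  have hdrop (j : ℕ) : Module.finrank k (LinearMap.range (f ^ (j + 1))) +
      (Finset.univ.filter fun s => j < p s).card ≤ Module.finrank k (LinearMap.range (f ^ j)) := by
    rw [← finrank_map_add_finrank_ker_inf f (LinearMap.range (f ^ j)), ← LinearMap.range_comp,
      pow_succ', Module.End.mul_eq_comp, Nat.add_le_add_iff_left, ← Fintype.card_subtype,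
      ← finrank_span_eq_card (he.comp _ Subtype.val_injective)]
    refine Submodule.finrank_mono (Submodule.span_le.2 ?_)
    rintro _ ⟨⟨s, hs⟩, rfl⟩
    exact ⟨hker s, (LinearMap.iterateRange f).monotone (Nat.le_sub_one_of_lt hs) (hrange s)⟩
  have hsum (j : ℕ) : ∑ s, (p s - j) =
      ∑ s, (p s - (j + 1)) + (Finset.univ.filter fun s => j < p s).card := by
    rw [Finset.card_filter, ← Finset.sum_add_distrib]
    exact Finset.sum_congr rfl fun s _ => by split_ifs <;> omega
  have hanti : Antitone fun j =>
      (Module.finrank k (LinearMap.range (f ^ j)) : ℤ) - (∑ s, (p s - j) : ℕ) :=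
    antitone_nat_of_succ_le fun j => by have := hdrop j; have := hsum j; omega
  have hle := hanti (Nat.zero_le j)
  have hge := hanti (le_max_left j (∑ s, p s))
  have hlast : ∑ s, (p s - max j (∑ s, p s)) = 0 := Finset.sum_eq_zero fun s hs =>
    Nat.sub_eq_zero_of_le <|
      (Finset.single_le_sum (fun _ _ => Nat.zero_le _) hs).trans (le_max_right _ _)
  have hfirst : Module.finrank k (LinearMap.range (f ^ 0)) = ∑ s, p s := by
    rw [pow_zero, Module.End.one_eq_id, LinearMap.range_id, finrank_top, hdim]
  simp only [hlast, hfirst, Nat.sub_zero] at hle hge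
  rw [Multiset.map_map]
  change _ = ∑ s, (p s - j)
  omega

end JordanType

section GradedModules

variable {k V ι : Type*} [Field k] [AddCommGroup V] [Module k V]

/-- The basis `b`, whose members `b i` are declared to be of degree `deg i`, is adapted to the
family of subspaces `𝒜`: each `𝒜 d` is spanned by the members of degree `d`. -/
def IsHomogeneousBasis (𝒜 : ℕ → Submodule k V) (b : Module.Basis ι k V) (deg : ι → ℕ) : Prop :=
  ∀ d, 𝒜 d = Submodule.span k (b '' {i | deg i = d})

namespace IsHomogeneousBasis

variable {𝒜 : ℕ → Submodule k V} {b : Module.Basis ι k V} {deg : ι → ℕ}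

theorem mem (h : IsHomogeneousBasis 𝒜 b deg) (i : ι) : b i ∈ 𝒜 (deg i) :=
  h (deg i) ▸ Submodule.subset_span ⟨i, rfl, rfl⟩

theorem finrank_eq [Fintype ι] (h : IsHomogeneousBasis 𝒜 b deg) (d : ℕ) :
    Module.finrank k (𝒜 d) = (Finset.univ.filter fun i => deg i = d).card := by
  have hli : LinearIndependent k fun i : {i // deg i = d} => b i :=
    b.linearIndependent.comp _ Subtype.val_injective
  rw [h d, Set.image_eq_range, ← Fintype.card_subtype]
  exact finrank_span_eq_card hli

end IsHomogeneousBasis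

section Tensor

variable {A B κ : Type*} [CommRing A] [Algebra k A] [CommRing B] [Algebra k B]
  {𝒜 : ℕ → Submodule k A} {ℬ : ℕ → Submodule k B} {a : Module.Basis ι k A}
  {b : Module.Basis κ k B} {α : ι → ℕ} {β : κ → ℕ}

theorem IsHomogeneousBasis.tensorProduct (ha : IsHomogeneousBasis 𝒜 a α)
    (hb : IsHomogeneousBasis ℬ b β) :
    IsHomogeneousBasis (tensorGrading 𝒜 ℬ) (a.tensorProduct b) fun q => α q.1 + β q.2 := by
  intro d
  apply le_antisymm
  · refine iSup₂_le fun p hp => ?_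
    rw [ha, hb, Submodule.map₂_span_span]
    refine Submodule.span_mono ?_
    rintro _ ⟨_, ⟨i, hi, rfl⟩, _, ⟨j, hj, rfl⟩, rfl⟩
    exact ⟨(i, j), (congrArg₂ (· + ·) hi hj).trans hp, a.tensorProduct_apply b i j⟩
  · rw [Submodule.span_le]
    rintro _ ⟨⟨i, j⟩, h, rfl⟩
    rw [a.tensorProduct_apply]
    exact Submodule.mem_iSup_of_mem (α i, β j) <| Submodule.mem_iSup_of_mem h <|
      Submodule.apply_mem_map₂ _ (ha.mem i) (hb.mem j)

theorem finrank_tensorGrading [Finite ι] [Finite κ] (ha : IsHomogeneousBasis 𝒜 a α)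
    (hb : IsHomogeneousBasis ℬ b β) (d : ℕ) :
    Module.finrank k (tensorGrading 𝒜 ℬ d) = ∑ p ∈ Finset.HasAntidiagonal.antidiagonal d,
      Module.finrank k (𝒜 p.1) * Module.finrank k (ℬ p.2) := by
  cases nonempty_fintype ι
  cases nonempty_fintype κ
  rw [(ha.tensorProduct hb).finrank_eq, Finset.card_eq_sum_card_fiberwise
    (f := fun q => (α q.1, β q.2)) (t := Finset.HasAntidiagonal.antidiagonal d)
    (fun q hq => by simpa using hq)]
  refine Finset.sum_congr rfl fun p hp => ?_
  rw [ha.finrank_eq, hb.finrank_eq, ← Finset.card_product, ← Finset.filter_product,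
    Finset.univ_product_univ, Finset.filter_filter]
  congr 1
  ext q
  simp only [Finset.mem_filter_univ, Prod.ext_iff]
  rw [Finset.HasAntidiagonal.mem_antidiagonal] at hp
  omega

end Tensor

end GradedModules

section Lefschetz

variable {k A : Type*} [Field k] [CommRing A] [Algebra k A] {𝒜 : ℕ → Submodule k A} {ℓ : A}

theorem IsSL.eq_zero_of_pow_mul_eq_zero (h : IsSL 𝒜 ℓ) {i j : ℕ} [FiniteDimensional k (𝒜 i)]
    (hij : Module.finrank k (𝒜 i) ≤ Module.finrank k (𝒜 (i + j))) {a : A} (ha : a ∈ 𝒜 i)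
    (hz : ℓ ^ j * a = 0) : a = 0 := by
  have hker := finrank_map_add_finrank_ker_inf (LinearMap.mulLeft k (ℓ ^ j)) (𝒜 i)
  rw [h.2 i j, min_eq_left hij, Nat.add_eq_left] at hker
  have hbot := Submodule.finrank_eq_zero.1 hker
  exact (Submodule.eq_bot_iff _).1 hbot a ⟨hz, ha⟩

end Lefschetz

section ConjugatePartition

theorem conjHilb_eq_of_eq_zero {H : ℕ → ℕ} {N : ℕ} (hH : ∀ d, N ≤ d → H d = 0) (n : ℕ) :
    conjHilb H n = ((Multiset.range n).map fun i =>
      ((Finset.range N).filter fun d => i + 1 ≤ H d).card).filter fun c => 0 < c := by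
  have hcard (i : ℕ) : Set.ncard {d | i + 1 ≤ H d} =
      ((Finset.range N).filter fun d => i + 1 ≤ H d).card := by
    rw [← Set.ncard_coe_finset]
    congr 1
    ext d
    simp only [Set.mem_ofPred_eq, Finset.coe_filter, Finset.mem_range, iff_and_self]
    intro hd
    by_contra! hN
    rw [hH d hN] at hd
    omega
  simp only [conjHilb, hcard]

end ConjugatePartition

section HookBasis

variable {k A : Type*} [Field k] [CommRing A] [Algebra k A] {n : ℕ}

/-- The family `1, u, …, u ^ (n - 1), x`, with `x` indexed by `none`. -/
def hookFamily (n : ℕ) (u x : A) : Option (Fin n) → A := fun o => o.elim x fun i => u ^ (i : ℕ)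

/-- The degrees of the members of `hookFamily n u x` when `u` has degree one and `x` has
degree `c`. -/
def hookDegree (n c : ℕ) : Option (Fin n) → ℕ := fun o => o.elim c fun i => i

/-- The algebra has basis `1, u, …, u ^ (n - 1), x`, and `u` kills both `x` and `u ^ (n - 1)`.
The name refers to the Young diagram of the Jordan type `(n, 1)` of `u`. -/
structure IsHookBasis (b : Module.Basis (Option (Fin n)) k A) (u x : A) : Prop where
  coe_eq : ⇑b = hookFamily n u x
  mul_eq_zero : u * x = 0
  pow_eq_zero : u ^ n = 0

theorem IsHomogeneousBasis.finrank_eq_of_hookDegree {V : Type*} [AddCommGroup V] [Module k V]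
    {𝒜 : ℕ → Submodule k V} {b : Module.Basis (Option (Fin n)) k V} {c : ℕ}
    (h : IsHomogeneousBasis 𝒜 b (hookDegree n c)) (d : ℕ) :
    Module.finrank k (𝒜 d) = (if c = d then 1 else 0) + (if d < n then 1 else 0) := by
  rw [h.finrank_eq, Finset.card_filter, Fintype.sum_option, ← Finset.card_filter]
  congr 1
  split_ifs with hd
  · refine Finset.card_eq_one.2 ⟨⟨d, hd⟩, ?_⟩
    ext i
    rw [Finset.mem_filter_univ, Finset.mem_singleton, Fin.ext_iff]
    rfl
  · exact Finset.card_eq_zero.2 <| Finset.filter_eq_empty_iff.2 fun i _ hi => hd (hi ▸ i.isLt)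

namespace IsHookBasis

variable {b : Module.Basis (Option (Fin n)) k A} {u x : A}

theorem apply_some (h : IsHookBasis b u x) (i : Fin n) : b (some i) = u ^ (i : ℕ) :=
  congrFun h.coe_eq (some i)

theorem apply_none (h : IsHookBasis b u x) : b none = x :=
  congrFun h.coe_eq none

theorem pow_ne_zero (h : IsHookBasis b u x) {d : ℕ} (hd : d < n) : u ^ d ≠ 0 :=
  h.apply_some ⟨d, hd⟩ ▸ b.ne_zero _

theorem isJordanTypeOf (h : IsHookBasis b u x) (hn : 0 < n) :
    IsJordanTypeOf (LinearMap.mulLeft k u) {n, 1} := by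
  have := b.finiteDimensional_of_finite
  let top : Bool → Option (Fin n) := fun s => bif s then some ⟨n - 1, by omega⟩ else none
  have htop : Function.Injective top := by
    rintro (_ | _) (_ | _) <;> simp [top]
  have hJ := isJordanTypeOf_of_linearIndependent (f := LinearMap.mulLeft k u) (e := b ∘ top)
    (p := fun s => bif s then n else 1) (by simp [hn]) (b.linearIndependent.comp top htop)
    (by simp [top, h.apply_some, h.apply_none, h.mul_eq_zero, ← pow_succ', Nat.sub_add_cancel hn,
      h.pow_eq_zero])
    (by
      simp only [LinearMap.pow_mulLeft, Bool.forall_bool]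
      exact ⟨⟨x, by simp [top, h.apply_none]⟩, ⟨1, by simp [top, h.apply_some]⟩⟩)
    (by simp [Module.finrank_eq_card_basis b])
  simpa using hJ

variable {𝒜 : ℕ → Submodule k A} {c : ℕ}

theorem pow_mem (h : IsHookBasis b u x) (h𝒜 : IsHomogeneousBasis 𝒜 b (hookDegree n c)) (d : ℕ) :
    u ^ d ∈ 𝒜 d := by
  rcases lt_or_ge d n with hd | hd
  · exact h.apply_some ⟨d, hd⟩ ▸ h𝒜.mem (some ⟨d, hd⟩)
  · rw [pow_eq_zero_of_le hd h.pow_eq_zero]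
    exact zero_mem _

theorem map_mulLeft_pow_succ (h : IsHookBasis b u x)
    (h𝒜 : IsHomogeneousBasis 𝒜 b (hookDegree n c)) (i j : ℕ) :
    (𝒜 i).map (LinearMap.mulLeft k (u ^ (j + 1))) =
      Submodule.span k {u ^ (i + (j + 1))} := by
  apply le_antisymm
  · rw [h𝒜 i, Submodule.map_span, Submodule.span_le]
    rintro _ ⟨_, ⟨_ | s, hs, rfl⟩, rfl⟩
    · rw [LinearMap.mulLeft_apply, h.apply_none, pow_succ, mul_assoc, h.mul_eq_zero, mul_zero]
      exact zero_mem _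
    · obtain rfl : (s : ℕ) = i := hs
      rw [LinearMap.mulLeft_apply, h.apply_some, ← pow_add, add_comm]
      exact Submodule.mem_span_singleton_self _
  · rw [Submodule.span_singleton_le_iff_mem]
    exact ⟨u ^ i, h.pow_mem h𝒜 i, by rw [LinearMap.mulLeft_apply, ← pow_add, add_comm]⟩

theorem isSL (h : IsHookBasis b u x) (h𝒜 : IsHomogeneousBasis 𝒜 b (hookDegree n c))
    (hc : c < n) : IsSL 𝒜 u := by
  refine ⟨pow_one u ▸ h.pow_mem h𝒜 1, fun i j => ?_⟩
  obtain _ | j := j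
  · rw [pow_zero, LinearMap.mulLeft_one, Submodule.map_id, add_zero, min_self]
  · rw [h.map_mulLeft_pow_succ h𝒜, h𝒜.finrank_eq_of_hookDegree,
      h𝒜.finrank_eq_of_hookDegree]
    rcases lt_or_ge (i + (j + 1)) n with hlt | hge
    · rw [finrank_span_singleton (h.pow_ne_zero hlt)]
      split_ifs <;> omega
    · rw [pow_eq_zero_of_le hge h.pow_eq_zero, Submodule.span_zero_singleton, finrank_bot]
      split_ifs <;> omega

end IsHookBasis

end HookBasis

section HookAlgebra

variable {k : Type*} [Field k] {n : ℕ}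

/-- The ideal `(x², xy, yⁿ)` of `k[x, y]`, with `x = X 0` and `y = X 1`. -/
noncomputable def hookIdeal (k : Type*) [Field k] (n : ℕ) : Ideal (MvPolynomial (Fin 2) k) :=
  Ideal.span {X 0 ^ 2, X 0 * X 1, X 1 ^ n}

theorem X_pow_dvd_aeval_zero_X {f : MvPolynomial (Fin 2) k} (hf : f ∈ hookIdeal k n) :
    (Polynomial.X : Polynomial k) ^ n ∣ aeval ![0, Polynomial.X] f := by
  rw [← Ideal.mem_span_singleton, ← Ideal.mem_comap]
  refine Ideal.span_le.2 ?_ hf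
  simp [Set.insert_subset_iff]

theorem X_sq_dvd_aeval_X_zero (hn : n ≠ 0) {f : MvPolynomial (Fin 2) k} (hf : f ∈ hookIdeal k n) :
    (Polynomial.X : Polynomial k) ^ 2 ∣ aeval ![Polynomial.X, 0] f := by
  rw [← Ideal.mem_span_singleton, ← Ideal.mem_comap]
  refine Ideal.span_le.2 ?_ hf
  simp [Set.insert_subset_iff, hn]

variable {ε : k} {U : MvPolynomial (Fin 2) k}

-- Setting `x = 0` isolates the powers of `U`, and setting `y = 0` then isolates `x`.
theorem linearIndependent_hookFamily (hn : n ≠ 0) (hU : U = C ε * X 0 + X 1) :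
    LinearIndependent k (hookFamily n (Ideal.Quotient.mk (hookIdeal k n) U)
      (Ideal.Quotient.mk (hookIdeal k n) (X 0))) := by
  rw [Fintype.linearIndependent_iff]
  intro g hg
  have hmem : g none • X 0 + ∑ i : Fin n, g (some i) • U ^ (i : ℕ) ∈ hookIdeal k n := by
    rw [← Ideal.Quotient.eq_zero_iff_mem, ← Ideal.Quotient.mkₐ_eq_mk k]
    simp only [map_add, map_sum, map_smul, map_pow]
    exact (Fintype.sum_option _).symm.trans hg
  have hsome (i : Fin n) : g (some i) = 0 := by
    have h := Polynomial.X_pow_dvd_iff.1 (X_pow_dvd_aeval_zero_X hmem) i i.isLt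
    simpa [hU, Polynomial.coeff_X_pow, Fin.val_inj] using h
  have hnone : g none = 0 := by
    have h := Polynomial.X_pow_dvd_iff.1 (X_sq_dvd_aeval_X_zero hn hmem) 1 one_lt_two
    simpa [hsome] using h
  exact fun o => o.rec hnone hsome

section Relations

variable {A : Type*} [CommRing A] [Algebra k A] {x y u : A}

theorem mul_eq_zero_of_eq_smul_add (hxx : x ^ 2 = 0) (hxy : x * y = 0) (hu : u = ε • x + y) :
    u * x = 0 := by
  rw [hu, Algebra.smul_def]
  linear_combination algebraMap k A ε * hxx + hxy

theorem pow_add_two_eq_of_eq_smul_add (hxx : x ^ 2 = 0) (hxy : x * y = 0) (hu : u = ε • x + y)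
    (m : ℕ) : u ^ (m + 2) = y ^ (m + 2) := by
  rw [Algebra.smul_def] at hu
  induction m with
  | zero => rw [hu]; linear_combination algebraMap k A ε ^ 2 * hxx + 2 * algebraMap k A ε * hxy
  | succ m ih =>
    calc u ^ (m + 3) = y ^ (m + 2) * u := by rw [pow_succ, ih]
      _ = y ^ (m + 3) := by rw [hu]; linear_combination algebraMap k A ε * y ^ (m + 1) * hxy

theorem pow_mul_pow_mem_span_hookFamily {c : ℕ} (hn : 2 ≤ n) (hε : ε = 0 ∨ c = 1)
    (hxx : x ^ 2 = 0) (hxy : x * y = 0) (hyn : y ^ n = 0) (hu : u = ε • x + y) (r s : ℕ) :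
    x ^ r * y ^ s ∈
      Submodule.span k (hookFamily n u x '' {o | hookDegree n c o = r * c + s}) := by
  have hmem (o : Option (Fin n)) (ho : hookDegree n c o = r * c + s) : hookFamily n u x o ∈
      Submodule.span k (hookFamily n u x '' {o | hookDegree n c o = r * c + s}) :=
    Submodule.subset_span ⟨o, ho, rfl⟩
  match r, s with
  | 0, 0 => simpa [hookFamily] using hmem (some ⟨0, by omega⟩) (by simp [hookDegree])
  | 0, 1 =>
    have hy : x ^ 0 * y ^ 1 = u - ε • x := by rw [hu]; simp
    rw [hy]
    refine sub_mem ?_ ?_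
    · simpa [hookFamily] using hmem (some ⟨1, by omega⟩) (by simp [hookDegree])
    · rcases hε with rfl | rfl
      · simp
      · exact Submodule.smul_mem _ _ (hmem none rfl)
  | 0, s + 2 =>
    rw [pow_zero, one_mul]
    rcases lt_or_ge (s + 2) n with hs | hs
    · rw [← pow_add_two_eq_of_eq_smul_add hxx hxy hu]
      exact hmem (some ⟨s + 2, hs⟩) (by simp [hookDegree])
    · rw [pow_eq_zero_of_le hs hyn]
      exact zero_mem _
  | 1, 0 => simpa [hookFamily] using hmem none (by simp [hookDegree])
  | 1, s + 1 =>
    rw [pow_one, pow_succ', ← mul_assoc, hxy, zero_mul]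
    exact zero_mem _
  | r + 2, s =>
    rw [pow_add, hxx, mul_zero, zero_mul]
    exact zero_mem _

end Relations

/-- The family of subspaces of `k[σ] / I` induced by the grading of `k[σ]` with weights `w`. -/
noncomputable def quotientGrading {σ : Type*} (I : Ideal (MvPolynomial σ k)) (w : σ → ℕ) (d : ℕ) :
    Submodule k (MvPolynomial σ k ⧸ I) :=
  Submodule.span k (Ideal.Quotient.mk I '' {f | f.IsWeightedHomogeneous w d})

theorem mk_mem_quotientGrading {σ : Type*} {I : Ideal (MvPolynomial σ k)} {w : σ → ℕ} {d : ℕ}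
    {f : MvPolynomial σ k} (hf : f.IsWeightedHomogeneous w d) :
    Ideal.Quotient.mk I f ∈ quotientGrading I w d :=
  Submodule.subset_span ⟨f, hf, rfl⟩

theorem mk_hookIdeal_eq_zero {f : MvPolynomial (Fin 2) k}
    (hf : f ∈ ({X 0 ^ 2, X 0 * X 1, X 1 ^ n} : Set (MvPolynomial (Fin 2) k))) :
    Ideal.Quotient.mk (hookIdeal k n) f = 0 :=
  Ideal.Quotient.eq_zero_iff_mem.2 (Ideal.subset_span hf)

theorem mk_eq_smul_add (hU : U = C ε * X 0 + X 1) : Ideal.Quotient.mk (hookIdeal k n) U =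
    ε • Ideal.Quotient.mk (hookIdeal k n) (X 0) + Ideal.Quotient.mk (hookIdeal k n) (X 1) := by
  rw [hU, C_mul', ← Ideal.Quotient.mkₐ_eq_mk k, map_add, map_smul]

variable {w : Fin 2 → ℕ}

theorem mk_monomial_mem_span_hookFamily (hn : 2 ≤ n) (hw : w 1 = 1) (hε : ε = 0 ∨ w 0 = 1)
    (hU : U = C ε * X 0 + X 1) (m : Fin 2 →₀ ℕ) (t : k) :
    Ideal.Quotient.mk (hookIdeal k n) (monomial m t) ∈ Submodule.span k
      (hookFamily n (Ideal.Quotient.mk (hookIdeal k n) U)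
        (Ideal.Quotient.mk (hookIdeal k n) (X 0)) ''
          {o | hookDegree n (w 0) o = Finsupp.weight w m}) := by
  have hmon : Ideal.Quotient.mk (hookIdeal k n) (monomial m t) =
      t • (Ideal.Quotient.mk (hookIdeal k n) (X 0) ^ m 0 *
        Ideal.Quotient.mk (hookIdeal k n) (X 1) ^ m 1) := by
    rw [monomial_eq, Finsupp.prod_fintype _ _ fun _ => pow_zero _, Fin.prod_univ_two, C_mul',
      ← Ideal.Quotient.mkₐ_eq_mk k, map_smul, map_mul, map_pow, map_pow]
  have hweight : Finsupp.weight w m = m 0 * w 0 + m 1 := by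
    rw [Finsupp.weight_apply, Finsupp.sum_fintype _ _ (by simp), Fin.sum_univ_two, hw,
      smul_eq_mul, smul_eq_mul, mul_one]
  rw [hmon, hweight]
  refine Submodule.smul_mem _ _ (pow_mul_pow_mem_span_hookFamily hn hε ?_ ?_ ?_
    (mk_eq_smul_add hU) _ _)
  · rw [← map_pow, mk_hookIdeal_eq_zero (by simp)]
  · rw [← map_mul, mk_hookIdeal_eq_zero (by simp)]
  · rw [← map_pow, mk_hookIdeal_eq_zero (by simp)]

theorem top_le_span_hookFamily (hn : 2 ≤ n) (hU : U = C ε * X 0 + X 1) :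
    ⊤ ≤ Submodule.span k (Set.range (hookFamily n (Ideal.Quotient.mk (hookIdeal k n) U)
      (Ideal.Quotient.mk (hookIdeal k n) (X 0)))) := by
  rintro a -
  obtain ⟨f, rfl⟩ := Ideal.Quotient.mk_surjective a
  rw [← f.support_sum_monomial_coeff, map_sum]
  exact sum_mem fun m _ => Submodule.span_mono (Set.image_subset_range _ _)
    (mk_monomial_mem_span_hookFamily (w := 1) hn rfl (Or.inr rfl) hU m _)

theorem quotientGrading_hookIdeal (hn : 2 ≤ n) (hw : w 1 = 1) (hε : ε = 0 ∨ w 0 = 1)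
    (hU : U = C ε * X 0 + X 1) (d : ℕ) :
    quotientGrading (hookIdeal k n) w d = Submodule.span k
      (hookFamily n (Ideal.Quotient.mk (hookIdeal k n) U)
        (Ideal.Quotient.mk (hookIdeal k n) (X 0)) '' {o | hookDegree n (w 0) o = d}) := by
  apply le_antisymm <;> refine Submodule.span_le.2 ?_
  · rintro _ ⟨f, hf, rfl⟩
    rw [← f.support_sum_monomial_coeff, map_sum]
    refine sum_mem fun m hm => ?_
    rw [← hf (mem_support_iff.1 hm)]
    exact mk_monomial_mem_span_hookFamily hn hw hε hU m _
  · have hX (i : Fin 2) := isWeightedHomogeneous_X k w i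
    have hU1 : U.IsWeightedHomogeneous w 1 := by
      rw [hU]
      refine IsWeightedHomogeneous.add ?_ (by simpa only [hw] using hX 1)
      rcases hε with rfl | h0
      · rw [C_0, zero_mul]
        exact isWeightedHomogeneous_zero k w _
      · simpa only [zero_add, h0] using (isWeightedHomogeneous_C w ε).mul (hX 0)
    rintro _ ⟨_ | i, rfl, rfl⟩
    · exact mk_mem_quotientGrading (hX 0)
    · exact mk_mem_quotientGrading (f := U ^ (i : ℕ)) (by simpa [hookDegree] using hU1.pow i)

theorem exists_isHookBasis_quotient (hn : 2 ≤ n) (hw : w 1 = 1) (hε : ε = 0 ∨ w 0 = 1)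
    (hU : U = C ε * X 0 + X 1) :
    ∃ b : Module.Basis (Option (Fin n)) k (MvPolynomial (Fin 2) k ⧸ hookIdeal k n),
      IsHookBasis b (Ideal.Quotient.mk (hookIdeal k n) U)
        (Ideal.Quotient.mk (hookIdeal k n) (X 0)) ∧
      IsHomogeneousBasis (quotientGrading (hookIdeal k n) w) b (hookDegree n (w 0)) := by
  have hxx := mk_hookIdeal_eq_zero (k := k) (n := n) (f := X 0 ^ 2) (by simp)
  have hxy := mk_hookIdeal_eq_zero (k := k) (n := n) (f := X 0 * X 1) (by simp)
  have hyn := mk_hookIdeal_eq_zero (k := k) (n := n) (f := X 1 ^ n) (by simp)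
  rw [map_pow] at hxx hyn
  rw [map_mul] at hxy
  have hu := mk_eq_smul_add (n := n) hU
  refine ⟨.mk (linearIndependent_hookFamily (by omega) hU) (top_le_span_hookFamily hn hU),
    ⟨Module.Basis.coe_mk _ _, mul_eq_zero_of_eq_smul_add hxx hxy hu, ?_⟩, fun d => ?_⟩
  · obtain ⟨m, rfl⟩ := Nat.exists_eq_add_of_le' hn
    rw [pow_add_two_eq_of_eq_smul_add hxx hxy hu, hyn]
  · rw [Module.Basis.coe_mk, quotientGrading_hookIdeal hn hw hε hU]

end HookAlgebra

section JordanStrings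

variable {C : Type*} [CommRing C] {U Z T W : C}

/-- The last vectors of Jordan strings of `U + Z` in an algebra where `U * T = Z * W = 0` and
`U ^ 4 = Z ^ 4 = 0`, when `T` and `W` are the two extra members of hook bases for `U` and `Z`. -/
def stringEnd (U Z T W : C) : Fin 7 → C :=
  ![U ^ 3 * Z ^ 3, U ^ 3 * Z ^ 2 - U ^ 2 * Z ^ 3, U ^ 3 * Z - U ^ 2 * Z ^ 2 + U * Z ^ 3,
    U ^ 3 - U ^ 2 * Z + U * Z ^ 2 - Z ^ 3, T * Z ^ 3, U ^ 3 * W, T * W]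

/-- The lengths of the Jordan strings ending in `stringEnd U Z T W`. -/
def stringLength : Fin 7 → ℕ := ![7, 5, 3, 1, 4, 4, 1]

theorem add_mul_stringEnd (hU : U ^ 4 = 0) (hZ : Z ^ 4 = 0) (hUT : U * T = 0) (hZW : Z * W = 0)
    (s : Fin 7) : (U + Z) * stringEnd U Z T W s = 0 := by
  fin_cases s <;> simp only [stringEnd]
  · change (U + Z) * (U ^ 3 * Z ^ 3) = 0
    linear_combination Z ^ 3 * hU + U ^ 3 * hZ
  · change (U + Z) * (U ^ 3 * Z ^ 2 - U ^ 2 * Z ^ 3) = 0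
    linear_combination Z ^ 2 * hU - U ^ 2 * hZ
  · change (U + Z) * (U ^ 3 * Z - U ^ 2 * Z ^ 2 + U * Z ^ 3) = 0
    linear_combination Z * hU + U * hZ
  · change (U + Z) * (U ^ 3 - U ^ 2 * Z + U * Z ^ 2 - Z ^ 3) = 0
    linear_combination hU - hZ
  · change (U + Z) * (T * Z ^ 3) = 0
    linear_combination Z ^ 3 * hUT + T * hZ
  · change (U + Z) * (U ^ 3 * W) = 0
    linear_combination W * hU + U ^ 3 * hZW
  · change (U + Z) * (T * W) = 0
    linear_combination W * hUT + T * hZW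

-- Modulo the relations `(U + Z) ^ 6 = 20 * U ^ 3 * Z ^ 3`, and the strings of lengths `5`
-- and `3` arrive at twice their ends; this is where `2` and `5` have to be inverted.
theorem exists_pow_mul_eq_stringEnd (hU : U ^ 4 = 0) (hZ : Z ^ 4 = 0) (hUT : U * T = 0)
    (hZW : Z * W = 0) (h2 : IsUnit (2 : C)) (h5 : IsUnit (5 : C)) (s : Fin 7) :
    ∃ v, (U + Z) ^ (stringLength s - 1) * v = stringEnd U Z T W s := by
  obtain ⟨a, ha⟩ := h2.exists_right_inv
  obtain ⟨b, hb⟩ := h5.exists_right_inv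
  fin_cases s
  · refine ⟨a ^ 2 * b, ?_⟩
    change (U + Z) ^ 6 * (a ^ 2 * b) = U ^ 3 * Z ^ 3
    linear_combination a ^ 2 * b * ((U ^ 2 + 6 * U * Z + 15 * Z ^ 2) * hU +
      (Z ^ 2 + 6 * Z * U + 15 * U ^ 2) * hZ) +
      U ^ 3 * Z ^ 3 * (5 * b * (2 * a + 1) * ha + hb)
  · refine ⟨a * (U - Z), ?_⟩
    change (U + Z) ^ 4 * (a * (U - Z)) = U ^ 3 * Z ^ 2 - U ^ 2 * Z ^ 3
    linear_combination a * ((U + 3 * Z) * hU - (Z + 3 * U) * hZ) +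
      (U ^ 3 * Z ^ 2 - U ^ 2 * Z ^ 3) * ha
  · refine ⟨a * (3 * U ^ 2 - 4 * U * Z + 3 * Z ^ 2), ?_⟩
    change (U + Z) ^ 2 * (a * (3 * U ^ 2 - 4 * U * Z + 3 * Z ^ 2)) =
      U ^ 3 * Z - U ^ 2 * Z ^ 2 + U * Z ^ 3
    linear_combination a * (3 * hU + 3 * hZ) + (U ^ 3 * Z - U ^ 2 * Z ^ 2 + U * Z ^ 3) * ha
  · refine ⟨U ^ 3 - U ^ 2 * Z + U * Z ^ 2 - Z ^ 3, ?_⟩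
    exact (congrArg (· * _) (pow_zero (U + Z))).trans (one_mul _)
  · refine ⟨T, ?_⟩
    change (U + Z) ^ 3 * T = T * Z ^ 3
    linear_combination (U ^ 2 + 3 * U * Z + 3 * Z ^ 2) * hUT
  · refine ⟨W, ?_⟩
    change (U + Z) ^ 3 * W = U ^ 3 * W
    linear_combination (Z ^ 2 + 3 * U * Z + 3 * U ^ 2) * hZW
  · refine ⟨T * W, ?_⟩
    exact (congrArg (· * _) (pow_zero (U + Z))).trans (one_mul _)

end JordanStrings

section TensorHook

variable {k A B : Type*} [Field k] [CommRing A] [Algebra k A] [CommRing B] [Algebra k B]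
  {a : Module.Basis (Option (Fin 4)) k A} {b : Module.Basis (Option (Fin 4)) k B} {u x : A}
  {z w : B}

theorem linearIndependent_stringEnd (ha : IsHookBasis a u x) (hb : IsHookBasis b z w) :
    LinearIndependent k (stringEnd (u ⊗ₜ[k] (1 : B)) ((1 : A) ⊗ₜ[k] z) (x ⊗ₜ[k] (1 : B))
      ((1 : A) ⊗ₜ[k] w)) := by
  let c := a.tensorProduct b
  let q : Fin 7 → Option (Fin 4) × Option (Fin 4) :=
    ![(some 3, some 3), (some 3, some 2), (some 3, some 1), (some 3, some 0), (none, some 3),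
      (some 3, none), (none, none)]
  have hends : stringEnd (u ⊗ₜ[k] (1 : B)) ((1 : A) ⊗ₜ[k] z) (x ⊗ₜ[k] (1 : B))
      ((1 : A) ⊗ₜ[k] w) = ![c (some 3, some 3), c (some 3, some 2) - c (some 2, some 3),
        c (some 3, some 1) - c (some 2, some 2) + c (some 1, some 3),
        c (some 3, some 0) - c (some 2, some 1) + c (some 1, some 2) - c (some 0, some 3),
        c (none, some 3), c (some 3, none), c (none, none)] := by
    simp [stringEnd, c, Module.Basis.tensorProduct_apply, ha.apply_some, hb.apply_some,
      ha.apply_none, hb.apply_none, Algebra.TensorProduct.tmul_pow]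
  have hcoord (s t : Fin 7) : c.coord (q s) (stringEnd (u ⊗ₜ[k] (1 : B)) ((1 : A) ⊗ₜ[k] z)
      (x ⊗ₜ[k] (1 : B)) ((1 : A) ⊗ₜ[k] w) t) = if s = t then 1 else 0 := by
    rw [hends]
    fin_cases s <;> fin_cases t <;> simp [q]
  exact .of_pairwise_dual_eq_zero_one _ (fun s => c.coord (q s))
    (fun s t hst => (hcoord s t).trans (if_neg hst)) fun s => (hcoord s s).trans (if_pos rfl)

theorem isJordanTypeOf_mulLeft_tmul_add_tmul (ha : IsHookBasis a u x) (hb : IsHookBasis b z w)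
    (h2 : (2 : k) ≠ 0) (h5 : (5 : k) ≠ 0) :
    IsJordanTypeOf (LinearMap.mulLeft k (u ⊗ₜ[k] (1 : B) + (1 : A) ⊗ₜ[k] z))
      {7, 5, 4, 4, 3, 1, 1} := by
  have := (a.tensorProduct b).finiteDimensional_of_finite
  have hU : (u ⊗ₜ[k] (1 : B)) ^ 4 = 0 := by
    rw [Algebra.TensorProduct.tmul_pow, ha.pow_eq_zero, zero_tmul]
  have hZ : ((1 : A) ⊗ₜ[k] z) ^ 4 = 0 := by
    rw [Algebra.TensorProduct.tmul_pow, hb.pow_eq_zero, tmul_zero]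
  have hUT : (u ⊗ₜ[k] (1 : B)) * (x ⊗ₜ[k] 1) = 0 := by
    rw [Algebra.TensorProduct.tmul_mul_tmul, ha.mul_eq_zero, zero_tmul]
  have hZW : ((1 : A) ⊗ₜ[k] z) * (1 ⊗ₜ[k] w) = 0 := by
    rw [Algebra.TensorProduct.tmul_mul_tmul, hb.mul_eq_zero, tmul_zero]
  have h2' : IsUnit (2 : A ⊗[k] B) :=
    map_ofNat (algebraMap k (A ⊗[k] B)) 2 ▸ h2.isUnit.map (algebraMap k (A ⊗[k] B))
  have h5' : IsUnit (5 : A ⊗[k] B) :=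
    map_ofNat (algebraMap k (A ⊗[k] B)) 5 ▸ h5.isUnit.map (algebraMap k (A ⊗[k] B))
  have hJ := isJordanTypeOf_of_linearIndependent
    (f := LinearMap.mulLeft k (u ⊗ₜ[k] (1 : B) + (1 : A) ⊗ₜ[k] z)) (p := stringLength) (by decide)
    (linearIndependent_stringEnd ha hb) (add_mul_stringEnd hU hZ hUT hZW)
    (fun s => by
      rw [LinearMap.pow_mulLeft]
      exact exists_pow_mul_eq_stringEnd hU hZ hUT hZW h2' h5' s)
    (by rw [Module.finrank_eq_card_basis (a.tensorProduct b)]; rfl)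
  exact (by decide : Finset.univ.val.map stringLength = {7, 5, 4, 4, 3, 1, 1}) ▸ hJ

variable {𝒜 : ℕ → Submodule k A} {ℬ : ℕ → Submodule k B}

theorem finrank_tensorGrading_of_hookDegree (h𝒜 : IsHomogeneousBasis 𝒜 a (hookDegree 4 1))
    (hℬ : IsHomogeneousBasis ℬ b (hookDegree 4 2)) (d : ℕ) :
    Module.finrank k (tensorGrading 𝒜 ℬ d) = [1, 3, 5, 7, 5, 3, 1].getD d 0 := by
  rcases lt_or_ge d 7 with hd | hd
  · rw [finrank_tensorGrading h𝒜 hℬ]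
    simp only [h𝒜.finrank_eq_of_hookDegree, hℬ.finrank_eq_of_hookDegree]
    interval_cases d <;> rfl
  · rw [List.getD_eq_default _ _ hd, finrank_tensorGrading h𝒜 hℬ]
    refine Finset.sum_eq_zero fun p hp => ?_
    rw [Finset.HasAntidiagonal.mem_antidiagonal] at hp
    rw [h𝒜.finrank_eq_of_hookDegree, hℬ.finrank_eq_of_hookDegree, Nat.mul_eq_zero]
    split_ifs <;> omega

theorem conjHilb_tensorGrading_of_hookDegree (h𝒜 : IsHomogeneousBasis 𝒜 a (hookDegree 4 1))
    (hℬ : IsHomogeneousBasis ℬ b (hookDegree 4 2)) :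
    conjHilb (fun d => Module.finrank k (tensorGrading 𝒜 ℬ d)) (Module.finrank k (A ⊗[k] B)) =
      {7, 5, 5, 3, 3, 1, 1} := by
  rw [Module.finrank_eq_card_basis (a.tensorProduct b)]
  simp only [finrank_tensorGrading_of_hookDegree h𝒜 hℬ]
  rw [conjHilb_eq_of_eq_zero fun d hd => List.getD_eq_default _ _ hd]
  decide

theorem not_isSL_tensorGrading (ha : IsHookBasis a u x) (hb : IsHookBasis b z w)
    (h𝒜 : IsHomogeneousBasis 𝒜 a (hookDegree 4 1)) (hℬ : IsHomogeneousBasis ℬ b (hookDegree 4 2)) :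
    ¬ IsSL (tensorGrading 𝒜 ℬ) (u ⊗ₜ[k] (1 : B) + (1 : A) ⊗ₜ[k] z) := by
  intro hSL
  have := (a.tensorProduct b).finiteDimensional_of_finite
  have hx : a.tensorProduct b (none, some 0) = x ⊗ₜ[k] 1 := by
    rw [a.tensorProduct_apply, ha.apply_none, hb.apply_some, Fin.val_zero, pow_zero]
  have hUT : (u ⊗ₜ[k] (1 : B)) * (x ⊗ₜ[k] 1) = 0 := by
    rw [Algebra.TensorProduct.tmul_mul_tmul, ha.mul_eq_zero, zero_tmul]
  have hZ : ((1 : A) ⊗ₜ[k] z) ^ 4 = 0 := by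
    rw [Algebra.TensorProduct.tmul_pow, hb.pow_eq_zero, tmul_zero]
  refine (a.tensorProduct b).ne_zero (none, some 0) <| hSL.eq_zero_of_pow_mul_eq_zero
    (i := 1) (j := 4) ?_ ((h𝒜.tensorProduct hℬ).mem (none, some 0)) ?_
  · simp only [finrank_tensorGrading_of_hookDegree h𝒜 hℬ]
    rfl
  · rw [hx]
    set U := u ⊗ₜ[k] (1 : B)
    set Z := (1 : A) ⊗ₜ[k] z
    linear_combination (U ^ 3 + 4 * U ^ 2 * Z + 6 * U * Z ^ 2 + 4 * Z ^ 3) * hUT +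
      (x ⊗ₜ[k] 1) * hZ

end TensorHook

theorem watanabe_example_general
    {k : Type*} [Field k] (h2 : (2 : k) ≠ 0) (h5 : (5 : k) ≠ 0)
    (IA IB : Ideal (MvPolynomial (Fin 2) k))
    (hIA : IA = Ideal.span {X 0 ^ 2, X 0 * X 1, X 1 ^ 4})
    (hIB : IB = Ideal.span {X 0 ^ 2, X 0 * X 1, X 1 ^ 4})
    (𝒜 : ℕ → Submodule k (MvPolynomial (Fin 2) k ⧸ IA))
    (h𝒜 : ∀ d : ℕ, 𝒜 d = Submodule.span k
      ((Ideal.Quotient.mk IA) '' {f | f.IsHomogeneous d}))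
    (ℬ : ℕ → Submodule k (MvPolynomial (Fin 2) k ⧸ IB))
    (hℬ : ∀ d : ℕ, ℬ d = Submodule.span k
      ((Ideal.Quotient.mk IB) '' {f | f.IsWeightedHomogeneous ![2, 1] d})) :
    (Module.finrank k (𝒜 0) = 1 ∧ Module.finrank k (𝒜 1) = 2 ∧
     Module.finrank k (𝒜 2) = 1 ∧ Module.finrank k (𝒜 3) = 1 ∧
     ∀ d : ℕ, 4 ≤ d → Module.finrank k (𝒜 d) = 0) ∧
    (Module.finrank k (ℬ 0) = 1 ∧ Module.finrank k (ℬ 1) = 1 ∧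
     Module.finrank k (ℬ 2) = 2 ∧ Module.finrank k (ℬ 3) = 1 ∧
     ∀ d : ℕ, 4 ≤ d → Module.finrank k (ℬ d) = 0) ∧
    (IsSL 𝒜 (Ideal.Quotient.mk IA (X 0 + X 1)) ∧
      IsJordanTypeOf (LinearMap.mulLeft k (Ideal.Quotient.mk IA (X 0 + X 1)))
        ({4, 1} : Multiset ℕ)) ∧
    (IsSL ℬ (Ideal.Quotient.mk IB (X 1)) ∧
      IsJordanTypeOf (LinearMap.mulLeft k (Ideal.Quotient.mk IB (X 1)))
        ({4, 1} : Multiset ℕ)) ∧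
    (Module.finrank k (tensorGrading 𝒜 ℬ 0) = 1 ∧
     Module.finrank k (tensorGrading 𝒜 ℬ 1) = 3 ∧
     Module.finrank k (tensorGrading 𝒜 ℬ 2) = 5 ∧
     Module.finrank k (tensorGrading 𝒜 ℬ 3) = 7 ∧
     Module.finrank k (tensorGrading 𝒜 ℬ 4) = 5 ∧
     Module.finrank k (tensorGrading 𝒜 ℬ 5) = 3 ∧
     Module.finrank k (tensorGrading 𝒜 ℬ 6) = 1 ∧
     ∀ d : ℕ, 7 ≤ d → Module.finrank k (tensorGrading 𝒜 ℬ d) = 0) ∧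
    conjHilb (fun d => Module.finrank k (tensorGrading 𝒜 ℬ d))
        (Module.finrank k ((MvPolynomial (Fin 2) k ⧸ IA) ⊗[k] (MvPolynomial (Fin 2) k ⧸ IB)))
      = ({7, 5, 5, 3, 3, 1, 1} : Multiset ℕ) ∧
    IsJordanTypeOf (k := k)
      (LinearMap.mulLeft k
        ((Ideal.Quotient.mk IA (X 0 + X 1)) ⊗ₜ[k] (1 : MvPolynomial (Fin 2) k ⧸ IB) +
          (1 : MvPolynomial (Fin 2) k ⧸ IA) ⊗ₜ[k] (Ideal.Quotient.mk IB (X 1))))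
      ({7, 5, 4, 4, 3, 1, 1} : Multiset ℕ) ∧
    ({7, 5, 4, 4, 3, 1, 1} : Multiset ℕ) ≠ ({7, 5, 5, 3, 3, 1, 1} : Multiset ℕ) ∧
    ¬ IsSL (k := k) (tensorGrading 𝒜 ℬ)
      ((Ideal.Quotient.mk IA (X 0 + X 1)) ⊗ₜ[k] (1 : MvPolynomial (Fin 2) k ⧸ IB) +
        (1 : MvPolynomial (Fin 2) k ⧸ IA) ⊗ₜ[k] (Ideal.Quotient.mk IB (X 1))) := by
  subst hIA hIB
  obtain rfl : 𝒜 = quotientGrading _ 1 := funext h𝒜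
  obtain rfl : ℬ = quotientGrading _ ![2, 1] := funext hℬ
  obtain ⟨a, ha, hA⟩ := exists_isHookBasis_quotient (k := k) (n := 4) (w := 1) (ε := 1)
    (U := X 0 + X 1) (by norm_num) rfl (Or.inr rfl) (by rw [C_1, one_mul])
  obtain ⟨b, hb, hB⟩ := exists_isHookBasis_quotient (k := k) (n := 4) (w := ![2, 1]) (ε := 0)
    (U := X 1) (by norm_num) rfl (Or.inl rfl) (by rw [C_0, zero_mul, zero_add])
  have hHA := hA.finrank_eq_of_hookDegree
  have hHB := hB.finrank_eq_of_hookDegree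
  have hHC := finrank_tensorGrading_of_hookDegree hA hB
  refine ⟨⟨hHA 0, hHA 1, hHA 2, hHA 3, fun d hd => ?_⟩,
    ⟨hHB 0, hHB 1, hHB 2, hHB 3, fun d hd => ?_⟩,
    ⟨ha.isSL hA (by decide), ha.isJordanTypeOf (by decide)⟩,
    ⟨hb.isSL hB (by decide), hb.isJordanTypeOf (by decide)⟩,
    ⟨hHC 0, hHC 1, hHC 2, hHC 3, hHC 4, hHC 5, hHC 6,
      fun d hd => (hHC d).trans (List.getD_eq_default _ _ hd)⟩,
    conjHilb_tensorGrading_of_hookDegree hA hB, isJordanTypeOf_mulLeft_tmul_add_tmul ha hb h2 h5,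
    by decide, not_isSL_tensorGrading ha hb hA hB⟩
  · exact (hHA d).trans (by rw [if_neg (by change 1 ≠ d; omega), if_neg (by omega)])
  · exact (hHB d).trans (by rw [if_neg (by change 2 ≠ d; omega), if_neg (by omega)])

/-- (J. Watanabe's example.)  Let `k` be a field of characteristic 0, let
`A = k[x,y]/(x², xy, y⁴)` with the standard grading and
`B = k[w,z]/(w², wz, z⁴)` graded with weights `w(w) = 2`, `w(z) = 1`, and let
`C = A ⊗_k B`.  Then `H(A) = (1,2,1,1)`, `H(B) = (1,1,2,1)`, `x + y ∈ A₁` is a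
strong Lefschetz element of `A` with Jordan type `(4,1)`, `z ∈ B₁` is a strong
Lefschetz element of `B` with Jordan type `(4,1)`, `H(C) = (1,3,5,7,5,3,1)` with
`H(C)^∨ = (7,5,5,3,3,1,1)`, but `ℓ = (x+y) ⊗ 1 + 1 ⊗ z ∈ C₁` has Jordan type
`P_ℓ = (7,5,4,4,3,1,1) ≠ H(C)^∨`; in particular `ℓ` is not a strong Lefschetz
element of `C`, even though its two components are strong Lefschetz for `A` and
`B`. -/
theorem watanabe_example
    {k : Type} [Field k] [CharZero k]
    (IA IB : Ideal (MvPolynomial (Fin 2) k))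
    (hIA : IA = Ideal.span {X 0 ^ 2, X 0 * X 1, X 1 ^ 4})
    (hIB : IB = Ideal.span {X 0 ^ 2, X 0 * X 1, X 1 ^ 4})
    (𝒜 : ℕ → Submodule k (MvPolynomial (Fin 2) k ⧸ IA))
    (h𝒜 : ∀ d : ℕ, 𝒜 d = Submodule.span k
      ((Ideal.Quotient.mk IA) '' {f | f.IsHomogeneous d}))
    (ℬ : ℕ → Submodule k (MvPolynomial (Fin 2) k ⧸ IB))
    (hℬ : ∀ d : ℕ, ℬ d = Submodule.span k
      ((Ideal.Quotient.mk IB) '' {f | f.IsWeightedHomogeneous ![2, 1] d})) :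
    (Module.finrank k (𝒜 0) = 1 ∧ Module.finrank k (𝒜 1) = 2 ∧
     Module.finrank k (𝒜 2) = 1 ∧ Module.finrank k (𝒜 3) = 1 ∧
     ∀ d : ℕ, 4 ≤ d → Module.finrank k (𝒜 d) = 0) ∧
    (Module.finrank k (ℬ 0) = 1 ∧ Module.finrank k (ℬ 1) = 1 ∧
     Module.finrank k (ℬ 2) = 2 ∧ Module.finrank k (ℬ 3) = 1 ∧
     ∀ d : ℕ, 4 ≤ d → Module.finrank k (ℬ d) = 0) ∧
    (IsSL 𝒜 (Ideal.Quotient.mk IA (X 0 + X 1)) ∧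
      IsJordanTypeOf (LinearMap.mulLeft k (Ideal.Quotient.mk IA (X 0 + X 1)))
        ({4, 1} : Multiset ℕ)) ∧
    (IsSL ℬ (Ideal.Quotient.mk IB (X 1)) ∧
      IsJordanTypeOf (LinearMap.mulLeft k (Ideal.Quotient.mk IB (X 1)))
        ({4, 1} : Multiset ℕ)) ∧
    (Module.finrank k (tensorGrading 𝒜 ℬ 0) = 1 ∧
     Module.finrank k (tensorGrading 𝒜 ℬ 1) = 3 ∧
     Module.finrank k (tensorGrading 𝒜 ℬ 2) = 5 ∧
     Module.finrank k (tensorGrading 𝒜 ℬ 3) = 7 ∧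
     Module.finrank k (tensorGrading 𝒜 ℬ 4) = 5 ∧
     Module.finrank k (tensorGrading 𝒜 ℬ 5) = 3 ∧
     Module.finrank k (tensorGrading 𝒜 ℬ 6) = 1 ∧
     ∀ d : ℕ, 7 ≤ d → Module.finrank k (tensorGrading 𝒜 ℬ d) = 0) ∧
    conjHilb (fun d => Module.finrank k (tensorGrading 𝒜 ℬ d))
        (Module.finrank k ((MvPolynomial (Fin 2) k ⧸ IA) ⊗[k] (MvPolynomial (Fin 2) k ⧸ IB)))
      = ({7, 5, 5, 3, 3, 1, 1} : Multiset ℕ) ∧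
    IsJordanTypeOf (k := k)
      (LinearMap.mulLeft k
        ((Ideal.Quotient.mk IA (X 0 + X 1)) ⊗ₜ[k] (1 : MvPolynomial (Fin 2) k ⧸ IB) +
          (1 : MvPolynomial (Fin 2) k ⧸ IA) ⊗ₜ[k] (Ideal.Quotient.mk IB (X 1))))
      ({7, 5, 4, 4, 3, 1, 1} : Multiset ℕ) ∧
    ({7, 5, 4, 4, 3, 1, 1} : Multiset ℕ) ≠ ({7, 5, 5, 3, 3, 1, 1} : Multiset ℕ) ∧
    ¬ IsSL (k := k) (tensorGrading 𝒜 ℬ)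
      ((Ideal.Quotient.mk IA (X 0 + X 1)) ⊗ₜ[k] (1 : MvPolynomial (Fin 2) k ⧸ IB) +
        (1 : MvPolynomial (Fin 2) k ⧸ IA) ⊗ₜ[k] (Ideal.Quotient.mk IB (X 1))) :=
  watanabe_example_general two_ne_zero (OfNat.ofNat_ne_zero 5) IA IB hIA hIB 𝒜 h𝒜 ℬ hℬ
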